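/- (Infinitesimal symmetry theorem.) Let Θ, ψ : ℝ⁸ → ℝ be smooth, let λ ∈ ℝ, and set ω_{ik} = Θ_{x^i y^k} − Θ_{x^k y^i}. Suppose ψ satisfies, at every point of ℝ⁸ and for every free index l = 1,…,4, the symmetric linear system Σ_{i,k,m} ε^{iklm} ω_{ik} (ψ_{y^m} − λ ψ_{x^m}) = 0. Then ψ satisfies the infinitesimal symmetry condition of the 4+4-dimensional TED equation: Σ_{i,k,l,m} ε^{iklm} ω_{ik} ψ_{x^l y^m} = 0 at every point. -/

import Mathlib

noncomputable section

/-- Partial derivative of `f : ℝⁿ → ℝ` in the `i`-th coordinate direction. -/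
def pd {n : ℕ} (i : Fin n) (f : (Fin n → ℝ) → ℝ) : (Fin n → ℝ) → ℝ :=
  fun p => fderiv ℝ f p (Pi.single i 1)

/-- `∂/∂x^i` on functions of `(x¹,…,x⁴,y¹,…,y⁴) ∈ ℝ⁸`. -/
def px (i : Fin 4) (f : (Fin 8 → ℝ) → ℝ) : (Fin 8 → ℝ) → ℝ :=
  pd ⟨i.val, by omega⟩ f

/-- `∂/∂y^i` on functions of `(x¹,…,x⁴,y¹,…,y⁴) ∈ ℝ⁸`. -/
def py (i : Fin 4) (f : (Fin 8 → ℝ) → ℝ) : (Fin 8 → ℝ) → ℝ :=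
  pd ⟨i.val + 4, by omega⟩ f

/-- Levi-Civita symbol on indices `1,…,4`. -/
def eps4 (i k l m : Fin 4) : ℝ :=
  Matrix.det (Matrix.of fun r c : Fin 4 => if (![i, k, l, m]) r = c then (1 : ℝ) else 0)

/-- `ω_{ik} = Θ_{x^i y^k} − Θ_{x^k y^i}`. -/
def omg (Θ : (Fin 8 → ℝ) → ℝ) (i k : Fin 4) : (Fin 8 → ℝ) → ℝ :=
  fun p => px i (py k Θ) p - px k (py i Θ) p

/-
Only derivatives in the `x`-directions are taken, so `β = Σ Θ_{y^k} dx^k` and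
`α = Σ (ψ_{y^m} - λ ψ_{x^m}) dx^m` may be read as 1-forms in `x`, with `ω = dβ`. The linear system
says `ω ∧ α = 0`; applying `d` and using `dω = 0` gives `ω ∧ dα = 0`. Since `λ` is constant, the
terms `ψ_{x^m}` add up to a closed form and do not contribute to `dα`, so
`ω ∧ d(Σ ψ_{y^m} dx^m) = 0`, which is the symmetry condition.
-/

open scoped Topology

section Antisymmetry

variable {ι R : Type*}

/-- Total antisymmetry of a tensor with four indices. Only the transpositions that move the third
index, which is the free index of the linear system, are listed; they generate all the others. -/
structure IsTotallyAntisymm [Neg R] (ε : ι → ι → ι → ι → R) : Prop where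
  swap_first_third : ∀ i k l m, ε l k i m = -ε i k l m
  swap_second_third : ∀ i k l m, ε i l k m = -ε i k l m
  swap_third_fourth : ∀ i k l m, ε i k m l = -ε i k l m

theorem sum_mul_eq_zero_of_antisymm_of_symm [Fintype ι] [NonUnitalNonAssocRing R]
    [IsAddTorsionFree R] {A S : ι → ι → R} (hA : ∀ i j, A j i = -A i j)
    (hS : ∀ i j, S j i = S i j) : ∑ i, ∑ j, A i j * S i j = 0 := by
  refine self_eq_neg.mp ?_
  calc ∑ i, ∑ j, A i j * S i j = ∑ j, ∑ i, A i j * S i j := Finset.sum_comm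
    _ = ∑ j, ∑ i, -(A j i * S j i) :=
      Finset.sum_congr rfl fun j _ => Finset.sum_congr rfl fun i _ => by
        rw [hA j i, hS j i, neg_mul]
    _ = -∑ i, ∑ j, A i j * S i j := by simp only [Finset.sum_neg_distrib]

theorem sum_sum_sum_rotate {κ μ : Type*} [Fintype ι] [Fintype κ] [Fintype μ] [AddCommMonoid R]
    (f : ι → κ → μ → R) : ∑ i, ∑ k, ∑ m, f i k m = ∑ m, ∑ i, ∑ k, f i k m := by
  rw [Finset.sum_comm (s := Finset.univ (α := μ))]
  exact Finset.sum_congr rfl fun i _ => Finset.sum_comm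

end Antisymmetry

theorem eps4_comp_swap (v : Fin 4 → Fin 4) {a b : Fin 4} (hab : a ≠ b) :
    eps4 (v (Equiv.swap a b 0)) (v (Equiv.swap a b 1)) (v (Equiv.swap a b 2))
      (v (Equiv.swap a b 3)) = -eps4 (v 0) (v 1) (v 2) (v 3) := by
  have eps4_eq_det (w : Fin 4 → Fin 4) : eps4 (w 0) (w 1) (w 2) (w 3) =
      Matrix.detRowAlternating (fun r c => if w r = c then (1 : ℝ) else 0) := by
    have hw : ![w 0, w 1, w 2, w 3] = w := by ext r; fin_cases r <;> rfl
    rw [eps4, hw]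
    rfl
  rw [eps4_eq_det v, ← AlternatingMap.map_swap _ _ hab]
  exact eps4_eq_det (v ∘ Equiv.swap a b)

theorem isTotallyAntisymm_eps4 : IsTotallyAntisymm eps4 where
  swap_first_third i k l m := eps4_comp_swap ![i, k, l, m] (a := 0) (b := 2) (by decide)
  swap_second_third i k l m := eps4_comp_swap ![i, k, l, m] (a := 1) (b := 2) (by decide)
  swap_third_fourth i k l m := eps4_comp_swap ![i, k, l, m] (a := 2) (b := 3) (by decide)

section DirDeriv

variable {𝕜 E : Type*} [NontriviallyNormedField 𝕜] [NormedAddCommGroup E] [NormedSpace 𝕜 E]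

/-- The derivative of `f` in the direction `v`, as a function of the point. Unlike `lineDeriv`, it
is read off from the Fréchet derivative, and `px` and `py` are instances of it by definition. -/
def dirDeriv (v : E) (f : E → 𝕜) : E → 𝕜 :=
  fun p => fderiv 𝕜 f p v

variable {f g : E → 𝕜} {p : E}

theorem dirDeriv_sub (hf : DifferentiableAt 𝕜 f p) (hg : DifferentiableAt 𝕜 g p) (v : E) :
    dirDeriv v (fun q => f q - g q) p = dirDeriv v f p - dirDeriv v g p := by
  simp only [dirDeriv, fderiv_fun_sub hf hg, _root_.sub_apply]

theorem dirDeriv_const_mul (hf : DifferentiableAt 𝕜 f p) (c : 𝕜) (v : E) :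
    dirDeriv v (fun q => c * f q) p = c * dirDeriv v f p := by
  simp only [dirDeriv, fderiv_const_mul hf, _root_.smul_apply, smul_eq_mul]

theorem dirDeriv_mul (hf : DifferentiableAt 𝕜 f p) (hg : DifferentiableAt 𝕜 g p) (v : E) :
    dirDeriv v (fun q => f q * g q) p = dirDeriv v f p * g p + f p * dirDeriv v g p := by
  simp only [dirDeriv, fderiv_fun_mul hf hg, _root_.add_apply, _root_.smul_apply, smul_eq_mul]
  ring

theorem dirDeriv_sum {ι : Type*} {s : Finset ι} {F : ι → E → 𝕜}
    (hF : ∀ i ∈ s, DifferentiableAt 𝕜 (F i) p) (v : E) :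
    dirDeriv v (fun q => ∑ i ∈ s, F i q) p = ∑ i ∈ s, dirDeriv v (F i) p := by
  simp only [dirDeriv, fderiv_fun_sum hF, _root_.sum_apply]

theorem dirDeriv_eq_zero_of_eventuallyEq_zero (hf : f =ᶠ[𝓝 p] 0) (v : E) :
    dirDeriv v f p = 0 := by
  simp [dirDeriv, hf.fderiv_eq]

theorem contDiffAt_dirDeriv {m n : WithTop ℕ∞} (hf : ContDiffAt 𝕜 n f p) (hmn : m + 1 ≤ n)
    (v : E) : ContDiffAt 𝕜 m (dirDeriv v f) p :=
  (hf.fderiv_right hmn).clm_apply contDiffAt_const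

theorem differentiableAt_dirDeriv (hf : ContDiffAt 𝕜 2 f p) (v : E) :
    DifferentiableAt 𝕜 (dirDeriv v f) p :=
  (contDiffAt_dirDeriv hf one_add_one_eq_two.le v).differentiableAt one_ne_zero

theorem dirDeriv_comm [IsRCLikeNormedField 𝕜] (hf : ContDiffAt 𝕜 2 f p) (u v : E) :
    dirDeriv u (dirDeriv v f) p = dirDeriv v (dirDeriv u f) p := by
  have hf' : DifferentiableAt 𝕜 (fderiv 𝕜 f) p :=
    (hf.fderiv_right one_add_one_eq_two.le).differentiableAt one_ne_zero
  have dirDeriv_dirDeriv (a b : E) :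
      dirDeriv a (dirDeriv b f) p = fderiv 𝕜 (fderiv 𝕜 f) p a b := by
    unfold dirDeriv
    simp [fderiv_clm_apply hf' (differentiableAt_const b)]
  rw [dirDeriv_dirDeriv, dirDeriv_dirDeriv]
  exact hf.isSymmSndFDerivAt (by simp) u v

theorem sum_mul_dirDeriv_mul_eq_zero {ι κ μ : Type*} [Fintype ι] [Fintype κ] [Fintype μ]
    {c : ι → κ → μ → 𝕜} {w : ι → κ → E → 𝕜} {α : μ → E → 𝕜}
    (hw : ∀ i k, DifferentiableAt 𝕜 (w i k) p) (hα : ∀ m, DifferentiableAt 𝕜 (α m) p)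
    (h : ∀ᶠ q in 𝓝 p, ∑ i, ∑ k, ∑ m, c i k m * w i k q * α m q = 0) (v : E) :
    ∑ i, ∑ k, ∑ m,
      c i k m * (dirDeriv v (w i k) p * α m p + w i k p * dirDeriv v (α m) p) = 0 := by
  have hprod (i : ι) (k : κ) (m : μ) : DifferentiableAt 𝕜 (fun q => w i k q * α m q) p :=
    (hw i k).mul (hα m)
  have hterm (i : ι) (k : κ) (m : μ) :
      DifferentiableAt 𝕜 (fun q => c i k m * (w i k q * α m q)) p :=
    (hprod i k m).const_mul _
  have hm (i : ι) (k : κ) : DifferentiableAt 𝕜 (fun q => ∑ m, c i k m * (w i k q * α m q)) p :=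
    .fun_sum fun m _ => hterm i k m
  have hkm (i : ι) : DifferentiableAt 𝕜 (fun q => ∑ k, ∑ m, c i k m * (w i k q * α m q)) p :=
    .fun_sum fun k _ => hm i k
  have hzero : dirDeriv v (fun q => ∑ i, ∑ k, ∑ m, c i k m * (w i k q * α m q)) p = 0 := by
    simp only [mul_assoc] at h
    exact dirDeriv_eq_zero_of_eventuallyEq_zero h v
  simpa only [dirDeriv_sum (fun i _ => hkm i), dirDeriv_sum (fun k _ => hm _ k),
    dirDeriv_sum (fun m _ => hterm _ _ m), dirDeriv_const_mul (hprod _ _ _),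
    dirDeriv_mul (hw _ _) (hα _)] using hzero

variable {ι : Type*}

/-- The components `∂_{X i} β_k - ∂_{X k} β_i` of the exterior derivative of the 1-form with
components `β`, where only derivatives along the directions `X` are taken. -/
def curl (X : ι → E) (β : ι → E → 𝕜) (i k : ι) : E → 𝕜 :=
  fun p => dirDeriv (X i) (β k) p - dirDeriv (X k) (β i) p

theorem differentiableAt_curl {X : ι → E} {β : ι → E → 𝕜} (hβ : ∀ k, ContDiffAt 𝕜 2 (β k) p)
    (i k : ι) : DifferentiableAt 𝕜 (curl X β i k) p :=
  (differentiableAt_dirDeriv (hβ k) (X i)).sub (differentiableAt_dirDeriv (hβ i) (X k))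

end DirDeriv

section Curl

variable {𝕜 E ι : Type*} [RCLike 𝕜] [NormedAddCommGroup E] [NormedSpace 𝕜 E] [Fintype ι]
variable {ε : ι → ι → ι → ι → 𝕜} {X : ι → E} {β α : ι → E → 𝕜} {p : E}

theorem sum_mul_dirDeriv_curl_eq_zero {η : ι → ι → ι → 𝕜}
    (hη_swap_first : ∀ i k l, η l k i = -η i k l)
    (hη_swap_second : ∀ i k l, η i l k = -η i k l) (hβ : ∀ k, ContDiffAt 𝕜 2 (β k) p) :
    ∑ i, ∑ k, ∑ l, η i k l * dirDeriv (X l) (curl X β i k) p = 0 := by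
  have hcurl (i k l : ι) : dirDeriv (X l) (curl X β i k) p =
      dirDeriv (X l) (dirDeriv (X i) (β k)) p - dirDeriv (X l) (dirDeriv (X k) (β i)) p :=
    dirDeriv_sub (differentiableAt_dirDeriv (hβ k) _) (differentiableAt_dirDeriv (hβ i) _) _
  have hfirst : ∑ i, ∑ k, ∑ l, η i k l * dirDeriv (X l) (dirDeriv (X i) (β k)) p = 0 := by
    rw [Finset.sum_comm]
    exact Finset.sum_eq_zero fun k _ => sum_mul_eq_zero_of_antisymm_of_symm
      (hη_swap_first · k ·) (fun i l => dirDeriv_comm (hβ k) (X i) (X l))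
  have hsecond : ∑ i, ∑ k, ∑ l, η i k l * dirDeriv (X l) (dirDeriv (X k) (β i)) p = 0 :=
    Finset.sum_eq_zero fun i _ => sum_mul_eq_zero_of_antisymm_of_symm
      (hη_swap_second i) (fun k l => dirDeriv_comm (hβ i) (X k) (X l))
  simp only [hcurl, mul_sub, Finset.sum_sub_distrib, hfirst, hsecond, sub_zero]

theorem sum_mul_curl_mul_dirDeriv_eq_zero (hε : IsTotallyAntisymm ε)
    (hβ : ∀ k, ContDiffAt 𝕜 2 (β k) p) (hα : ∀ m, DifferentiableAt 𝕜 (α m) p)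
    (h : ∀ l, ∀ᶠ q in 𝓝 p, ∑ i, ∑ k, ∑ m, ε i k l m * curl X β i k q * α m q = 0) :
    ∑ i, ∑ k, ∑ l, ∑ m, ε i k l m * curl X β i k p * dirDeriv (X l) (α m) p = 0 := by
  have hclosed : ∑ i, ∑ k, ∑ l, (∑ m, ε i k l m * α m p) * dirDeriv (X l) (curl X β i k) p = 0 :=
    sum_mul_dirDeriv_curl_eq_zero
      (fun i k l => by simp only [hε.swap_first_third i k l, neg_mul, Finset.sum_neg_distrib])
      (fun i k l => by simp only [hε.swap_second_third i k l, neg_mul, Finset.sum_neg_distrib]) hβ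
  have hleibniz : ∑ i, ∑ k, ∑ l, ∑ m, ε i k l m * (dirDeriv (X l) (curl X β i k) p * α m p +
      curl X β i k p * dirDeriv (X l) (α m) p) = 0 :=
    (sum_sum_sum_rotate _).trans <| Finset.sum_eq_zero fun l _ =>
      sum_mul_dirDeriv_mul_eq_zero (c := fun i k m => ε i k l m) (differentiableAt_curl hβ) hα
        (h l) (X l)
  have hsplit (i k l m : ι) : ε i k l m * (dirDeriv (X l) (curl X β i k) p * α m p +
      curl X β i k p * dirDeriv (X l) (α m) p) =
      ε i k l m * α m p * dirDeriv (X l) (curl X β i k) p +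
        ε i k l m * curl X β i k p * dirDeriv (X l) (α m) p := by ring
  simpa only [hsplit, Finset.sum_add_distrib, ← Finset.sum_mul, hclosed, zero_add] using hleibniz

end Curl

theorem stmt3_general {𝕜 E ι : Type*} [RCLike 𝕜] [NormedAddCommGroup E] [NormedSpace 𝕜 E]
    [Fintype ι] {ε : ι → ι → ι → ι → 𝕜} (hε : IsTotallyAntisymm ε) (X Y : ι → E)
    {Θ ψ : E → 𝕜} {p : E} (hΘ : ContDiffAt 𝕜 3 Θ p) (hψ : ContDiffAt 𝕜 2 ψ p) (lam : 𝕜)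
    (hlin : ∀ l, ∀ᶠ q in 𝓝 p, ∑ i, ∑ k, ∑ m, ε i k l m *
      curl X (fun j => dirDeriv (Y j) Θ) i k q *
        (dirDeriv (Y m) ψ q - lam * dirDeriv (X m) ψ q) = 0) :
    ∑ i, ∑ k, ∑ l, ∑ m, ε i k l m * curl X (fun j => dirDeriv (Y j) Θ) i k p *
      dirDeriv (X l) (dirDeriv (Y m) ψ) p = 0 := by
  have hβ (j : ι) : ContDiffAt 𝕜 2 (dirDeriv (Y j) Θ) p :=
    contDiffAt_dirDeriv hΘ two_add_one_eq_three.le (Y j)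
  have hY (m : ι) : DifferentiableAt 𝕜 (dirDeriv (Y m) ψ) p := differentiableAt_dirDeriv hψ (Y m)
  have hX (m : ι) : DifferentiableAt 𝕜 (dirDeriv (X m) ψ) p := differentiableAt_dirDeriv hψ (X m)
  have hα (l m : ι) : dirDeriv (X l) (fun q => dirDeriv (Y m) ψ q - lam * dirDeriv (X m) ψ q) p =
      dirDeriv (X l) (dirDeriv (Y m) ψ) p - lam * dirDeriv (X l) (dirDeriv (X m) ψ) p := by
    rw [dirDeriv_sub (hY m) ((hX m).const_mul lam), dirDeriv_const_mul (hX m)]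
  have hgradient (i k : ι) :
      ∑ l, ∑ m, ε i k l m * curl X (fun j => dirDeriv (Y j) Θ) i k p *
        (lam * dirDeriv (X l) (dirDeriv (X m) ψ) p) = 0 :=
    sum_mul_eq_zero_of_antisymm_of_symm
      (fun l m => by rw [hε.swap_third_fourth i k l m, neg_mul])
      (fun l m => by rw [dirDeriv_comm hψ])
  have hwedge := sum_mul_curl_mul_dirDeriv_eq_zero hε hβ
    (α := fun m q => dirDeriv (Y m) ψ q - lam * dirDeriv (X m) ψ q)
    (fun m => (hY m).sub ((hX m).const_mul lam)) hlin
  simpa only [hα, mul_sub, Finset.sum_sub_distrib, hgradient, Finset.sum_const_zero,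
    sub_zero] using hwedge

/-- infinitesimal symmetry theorem: if a smooth `ψ` satisfies the symmetric
linear system `Σ_{i,k,m} ε^{iklm} ω_{ik} (ψ_{y^m} − λ ψ_{x^m}) = 0` (for every free index `l`
and every point), then `Σ_{i,k,l,m} ε^{iklm} ω_{ik} ψ_{x^l y^m} = 0` at every point. -/
theorem stmt3 (Θ ψ : (Fin 8 → ℝ) → ℝ) (hΘ : ContDiff ℝ (⊤ : ℕ∞) Θ)
    (hψ : ContDiff ℝ (⊤ : ℕ∞) ψ) (lam : ℝ)
    (hlin : ∀ l : Fin 4, ∀ p : Fin 8 → ℝ,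
      ∑ i, ∑ k, ∑ m, eps4 i k l m * omg Θ i k p * (py m ψ p - lam * px m ψ p) = 0) :
    ∀ p : Fin 8 → ℝ,
      ∑ i, ∑ k, ∑ l, ∑ m, eps4 i k l m * omg Θ i k p * px l (py m ψ) p = 0 := by
  intro p
  exact stmt3_general (E := Fin 8 → ℝ) isTotallyAntisymm_eps4
    (fun i => Pi.single ⟨i.val, by omega⟩ 1) (fun i => Pi.single ⟨i.val + 4, by omega⟩ 1)
    (contDiff_infty.1 hΘ 3).contDiffAt (contDiff_infty.1 hψ 2).contDiffAt lam
    fun l => .of_forall (hlin l)
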